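/- Let k ≥ 2 and t ≥ 2 be integers and let G be a fixed edge-critical graph with chromatic number χ(G) = k + 1. Then there exists n₀ such that for all integers n ≥ n₀, every 2-coloring with colors red and blue of the edges of the graph obtained from the complete graph on k·n·t vertices by adding one new vertex joined to exactly (k−1)·n·t + t of its vertices contains either a red copy of G or a blue copy of K₁ + nK_t. -/

import Mathlib

open SimpleGraph

/-- `containsCopy F G` : the graph `F` contains a copy of the graph `G` (as a subgraph). -/
def containsCopy {V W : Type*} (F : SimpleGraph V) (G : SimpleGraph W) : Prop :=
  ∃ f : G →g F, Function.Injective f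

/-- `arrows N G H` : every red/blue coloring of the edges of `K_N` (given by the graph `R` of
red edges, whose complement is the graph of blue edges) contains a red copy of `G` or a
blue copy of `H`. -/
def arrows {V W : Type*} (N : ℕ) (G : SimpleGraph V) (H : SimpleGraph W) : Prop :=
  ∀ R : SimpleGraph (Fin N), containsCopy R G ∨ containsCopy Rᶜ H

/-- The Ramsey number `R(G, H)`. -/
noncomputable def ramseyNumber {V W : Type*} (G : SimpleGraph V) (H : SimpleGraph W) : ℕ :=
  sInf { N : ℕ | 0 < N ∧ arrows N G H }

/-- The generalized fan `K₁ + nK_t` : the join of a single vertex (`none`) with `n` disjoint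
copies of `K_t`. -/
def genFan (n t : ℕ) : SimpleGraph (Option (Fin n × Fin t)) :=
  SimpleGraph.fromRel (fun a b =>
    a = none ∨ ∃ p q : Fin n × Fin t, a = some p ∧ b = some q ∧ p.1 = q.1)

/-- A graph `G` is edge-critical if it has an edge `e` with `χ(G - e) = χ(G) - 1`. -/
def EdgeCritical {V : Type*} (G : SimpleGraph V) : Prop :=
  ∃ u v : V, G.Adj u v ∧ (G.deleteEdges {s(u, v)}).chromaticNumber + 1 = G.chromaticNumber

/-- `K_m ⊔ K_{1,ℓ}` : the complete graph on the `m` vertices `some i`, together with one new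
vertex `none` joined to exactly the `ℓ` vertices `some i` with `i < ℓ` (for `ℓ ≤ m`). -/
def KstarK (m ℓ : ℕ) : SimpleGraph (Option (Fin m)) :=
  SimpleGraph.fromRel (fun a b =>
    ((∃ i : Fin m, a = some i) ∧ ∃ j : Fin m, b = some j) ∨
      (a = none ∧ ∃ j : Fin m, b = some j ∧ (j : ℕ) < ℓ))

/-- `starArrows m ℓ G H` : every red/blue coloring of the edges of `K_m ⊔ K_{1,ℓ}` (the red
edges forming a subgraph `R`, the blue edges the remaining edges) contains a red copy of `G`
or a blue copy of `H`. -/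
def starArrows {V W : Type*} (m ℓ : ℕ) (G : SimpleGraph V) (H : SimpleGraph W) : Prop :=
  ∀ R : SimpleGraph (Option (Fin m)), R ≤ KstarK m ℓ →
    containsCopy R G ∨ containsCopy (KstarK m ℓ \ R) H

/-- The star-critical Ramsey number `r₊(G, H)`. -/
noncomputable def starRamsey {V W : Type*} (G : SimpleGraph V) (H : SimpleGraph W) : ℕ :=
  sInf { ℓ : ℕ | starArrows (ramseyNumber G H - 1) ℓ G H }

/-- The chromatic number of `G` as a natural number. -/
noncomputable def chromNum {V : Type*} (G : SimpleGraph V) : ℕ := G.chromaticNumber.toNat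

/-- `s(G)` : the minimum size of a color class over all proper `χ(G)`-colorings of `G`. -/
noncomputable def minClassSize {V : Type*} (G : SimpleGraph V) : ℕ :=
  sInf { m : ℕ | ∃ C : G.Coloring (Fin (chromNum G)), ∃ i : Fin (chromNum G),
    m = {v | C v = i}.ncard }

/-- `τ(G)` : the minimum, over all proper `χ(G)`-colorings of `G` having a color class `U_j`
of size `s(G)`, over all vertices `v ∈ U_j` and all other color classes `U_i`, of the number
of neighbors of `v` in `U_i`. -/
noncomputable def tauNum {V : Type*} (G : SimpleGraph V) : ℕ :=
  sInf { m : ℕ | ∃ C : G.Coloring (Fin (chromNum G)), ∃ j : Fin (chromNum G),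
    {v | C v = j}.ncard = minClassSize G ∧
    ∃ v, C v = j ∧ ∃ i : Fin (chromNum G), i ≠ j ∧ m = {u | C u = i ∧ G.Adj v u}.ncard }

section helpers
open Finset
open scoped Classical

def CritCol {V : Type*} (G : SimpleGraph V) {k : ℕ} (u0 v0 : V) (c : V → Fin k) : Prop :=
  G.Adj u0 v0 ∧ c u0 = c v0 ∧ ∀ a b, G.Adj a b → s(a, b) ≠ s(u0, v0) → c a ≠ c b

lemma exists_critCol {V : Type*} (G : SimpleGraph V) (k : ℕ)
    (hchi : G.chromaticNumber = (k + 1 : ℕ)) (hcrit : EdgeCritical G) :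
    ∃ (u0 v0 : V) (c : V → Fin k), CritCol G u0 v0 c := by
  obtain ⟨u, v, huv, h⟩ := hcrit
  rw [hchi] at h
  have h2 : (G.deleteEdges {s(u, v)}).chromaticNumber = (k : ℕ) := by
    push_cast at h
    exact ENat.add_left_injective_of_ne_top (n := 1) (by simp) h
  have h3 : (G.deleteEdges {s(u, v)}).Colorable k :=
    SimpleGraph.chromaticNumber_le_iff_colorable.1 h2.le
  obtain ⟨C⟩ := h3
  have hC : ∀ a b, G.Adj a b → s(a, b) ≠ s(u, v) → C a ≠ C b := by
    intro a b hab hne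
    apply C.valid
    rw [SimpleGraph.deleteEdges_adj]
    exact ⟨hab, by simpa using hne⟩
  refine ⟨u, v, C, huv, ?_, hC⟩
  by_contra hne
  have : G.Colorable k := by
    refine ⟨SimpleGraph.Coloring.mk C ?_⟩
    intro a b hab
    by_cases hs : s(a, b) = s(u, v)
    · rw [Sym2.eq_iff] at hs
      rcases hs with ⟨rfl, rfl⟩ | ⟨rfl, rfl⟩
      · exact hne
      · exact fun h => hne h.symm
    · exact hC a b hab hs
  have := SimpleGraph.chromaticNumber_le_iff_colorable.2 this
  rw [hchi] at this
  have : k + 1 ≤ k := by exact_mod_cast this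
  omega

lemma greedy {V W : Type*} [Nonempty W] (G : SimpleGraph V) (R : SimpleGraph W)
    (T : V → Finset W) (D : ℕ) (s : Finset V)
    (h1 : ∀ a ∈ s, ∀ b ∈ s, G.Adj a b → ∀ x ∈ T a, #{y ∈ T b | ¬R.Adj x y} ≤ D)
    (h2 : ∀ a ∈ s, #s * (D + 1) < #(T a)) :
    ∃ f : V → W, (∀ a ∈ s, f a ∈ T a) ∧ (∀ a ∈ s, ∀ b ∈ s, a ≠ b → f a ≠ f b) ∧
      ∀ a ∈ s, ∀ b ∈ s, G.Adj a b → R.Adj (f a) (f b) := by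
  induction s using Finset.induction_on with
  | empty => exact ⟨fun _ => Classical.arbitrary W, by simp, by simp, by simp⟩
  | insert v s hv ih =>
    have hcard : #(insert v s) = #s + 1 := Finset.card_insert_of_notMem hv
    obtain ⟨f, f1, f2, f3⟩ := ih
      (fun a ha b hb => h1 a (mem_insert_of_mem ha) b (mem_insert_of_mem hb))
      (fun a ha => lt_of_le_of_lt (Nat.mul_le_mul_right _ (by omega)) (h2 a (mem_insert_of_mem ha)))
    let bad : V → Finset W := fun a =>
      insert (f a) (if G.Adj a v then {y ∈ T v | ¬R.Adj (f a) y} else ∅)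
    have hbad : ∀ a ∈ s, #(bad a) ≤ D + 1 := by
      intro a ha
      refine (Finset.card_insert_le _ _).trans ?_
      split_ifs with hav
      · have := h1 a (mem_insert_of_mem ha) v (mem_insert_self _ _) hav _ (f1 a ha)
        omega
      · simp
    have hB : #(s.biUnion bad) < #(T v) := by
      refine lt_of_le_of_lt (Finset.card_biUnion_le_card_mul _ _ _ hbad) ?_
      exact lt_of_le_of_lt (Nat.mul_le_mul_right _ (by omega)) (h2 v (mem_insert_self _ _))
    obtain ⟨y, hyT, hyB⟩ := Finset.exists_mem_notMem_of_card_lt_card hB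
    simp only [mem_biUnion, not_exists, not_and] at hyB
    have hy1 : ∀ a ∈ s, y ≠ f a := by
      intro a ha h
      exact hyB a ha (by simp [bad, h])
    have hy2 : ∀ a ∈ s, G.Adj a v → R.Adj (f a) y := by
      intro a ha hav
      by_contra hR
      exact hyB a ha (by simp [bad, hav, hyT, hR])
    have hne : ∀ a ∈ s, a ≠ v := fun a ha h => hv (h ▸ ha)
    refine ⟨Function.update f v y, ?_, ?_, ?_⟩
    · intro a ha
      rcases mem_insert.1 ha with rfl | ha
      · simpa using hyT
      · rw [Function.update_of_ne (hne a ha)]; exact f1 a ha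
    · intro a ha b hb hab
      rcases mem_insert.1 ha with rfl | ha' <;> rcases mem_insert.1 hb with rfl | hb'
      · exact absurd rfl hab
      · rw [Function.update_of_ne (hne b hb'), Function.update_self]; exact hy1 b hb'
      · rw [Function.update_of_ne (hne a ha'), Function.update_self]; exact (hy1 a ha').symm
      · rw [Function.update_of_ne (hne a ha'), Function.update_of_ne (hne b hb')]
        exact f2 a ha' b hb' hab
    · intro a ha b hb hab
      rcases mem_insert.1 ha with rfl | ha' <;> rcases mem_insert.1 hb with rfl | hb'
      · exact absurd rfl hab.ne
      · rw [Function.update_of_ne (hne b hb'), Function.update_self]; exact (hy2 b hb' hab.symm).symm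
      · rw [Function.update_of_ne (hne a ha'), Function.update_self]; exact hy2 a ha' hab
      · rw [Function.update_of_ne (hne a ha'), Function.update_of_ne (hne b hb')]
        exact f3 a ha' b hb' hab

lemma embed {V W : Type*} [Fintype V] {G : SimpleGraph V} {k : ℕ} {u0 v0 : V} {c : V → Fin k}
    (hc : CritCol G u0 v0 c) (R : SimpleGraph W) (S : Fin k → Finset W) (D : ℕ)
    (hS : ∀ i j, i ≠ j → ∀ x ∈ S i, #{y ∈ S j | ¬R.Adj x y} ≤ D)
    (p q : W) (i : Fin k) (hpq : R.Adj p q)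
    (h : ∀ j, j ≠ i → Fintype.card V * (D + 1) < #{y ∈ S j | R.Adj p y ∧ R.Adj q y})
    (hi : Fintype.card V * (D + 1) + 2 < #(S i)) : containsCopy R G := by
  obtain ⟨hadj, hcc, hcol⟩ := hc
  let e : Equiv.Perm (Fin k) := Equiv.swap (c u0) i
  have heu : e (c u0) = i := by simp [e]
  have hev : e (c v0) = i := by rw [← hcc]; exact heu
  have hcol' : ∀ a b, G.Adj a b → s(a, b) ≠ s(u0, v0) → e (c a) ≠ e (c b) :=
    fun a b hab hs h => hcol a b hab hs (e.injective h)
  let T : V → Finset W := fun a => if e (c a) = i then S i \ {p, q} else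
    {y ∈ S (e (c a)) | R.Adj p y ∧ R.Adj q y}
  have hTS : ∀ a, T a ⊆ S (e (c a)) := by
    intro a
    simp only [T]
    split_ifs with h
    · rw [h]; exact sdiff_subset
    · exact filter_subset _ _
  have : Nonempty W := ⟨p⟩
  have hns : ∀ a b, b ≠ u0 → b ≠ v0 → s(a, b) ≠ s(u0, v0) := by
    intro a b h1 h2 h
    rw [Sym2.eq_iff] at h
    rcases h with ⟨_, h⟩ | ⟨_, h⟩
    · exact h2 h
    · exact h1 h
  have hmem : ∀ a, a ∈ (univ \ {u0, v0} : Finset V) ↔ a ≠ u0 ∧ a ≠ v0 := by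
    intro a; simp
  obtain ⟨f, f1, f2, f3⟩ := greedy G R T D (univ \ {u0, v0}) (by
      intro a ha b hb hab x hx
      rw [hmem] at ha hb
      refine le_trans (card_le_card ?_) (hS (e (c a)) (e (c b))
        (hcol' a b hab (hns a b hb.1 hb.2)) x (hTS a hx))
      exact filter_subset_filter _ (hTS b)) (by
      intro a ha
      have hle : #(univ \ {u0, v0} : Finset V) * (D + 1) ≤ Fintype.card V * (D + 1) :=
        Nat.mul_le_mul_right _ (card_le_univ _)
      simp only [T]
      split_ifs with h'
      · have h1 := le_card_sdiff {p, q} (S i)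
        have h2 : #({p, q} : Finset W) ≤ 2 := card_le_two
        omega
      · have := h _ h'
        omega)
  have hT1 : ∀ a, e (c a) ≠ i → a ≠ u0 → a ≠ v0 → R.Adj p (f a) ∧ R.Adj q (f a) := by
    intro a ha h1 h2
    have := f1 a ((hmem a).2 ⟨h1, h2⟩)
    simp only [T, if_neg ha, mem_filter] at this
    exact this.2
  have hT2 : ∀ a, a ≠ u0 → a ≠ v0 → f a ≠ p ∧ f a ≠ q := by
    intro a h1 h2
    by_cases ha : e (c a) = i
    · have := f1 a ((hmem a).2 ⟨h1, h2⟩)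
      simp only [T, if_pos ha, mem_sdiff, mem_insert, mem_singleton, not_or] at this
      exact this.2
    · exact ⟨(hT1 a ha h1 h2).1.ne.symm, (hT1 a ha h1 h2).2.ne.symm⟩
  have huv : u0 ≠ v0 := hadj.ne
  let F : V → W := fun a => if a = u0 then p else if a = v0 then q else f a
  have Fu : F u0 = p := by simp [F]
  have Fv : F v0 = q := by simp [F, huv.symm]
  have Fa : ∀ a, a ≠ u0 → a ≠ v0 → F a = f a := by intro a h1 h2; simp [F, h1, h2]
  have hau : ∀ a, G.Adj u0 a → a ≠ v0 → R.Adj p (F a) := by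
    intro a h1 h2
    rw [Fa a h1.ne.symm h2]
    refine (hT1 a ?_ h1.ne.symm h2).1
    rw [← heu]
    exact (hcol' u0 a h1 (hns u0 a h1.ne.symm h2)).symm
  have hav : ∀ a, G.Adj v0 a → a ≠ u0 → R.Adj q (F a) := by
    intro a h1 h2
    rw [Fa a h2 h1.ne.symm]
    refine (hT1 a ?_ h2 h1.ne.symm).2
    rw [← hev]
    exact (hcol' v0 a h1 (hns v0 a h2 h1.ne.symm)).symm
  refine ⟨⟨F, ?_⟩, ?_⟩
  · intro a b hab
    by_cases hu : a = u0
    · subst hu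
      rw [Fu]
      by_cases hbv : b = v0
      · subst hbv; rw [Fv]; exact hpq
      · exact hau b hab hbv
    by_cases hv : a = v0
    · subst hv
      rw [Fv]
      by_cases hbu : b = u0
      · subst hbu; rw [Fu]; exact hpq.symm
      · exact hav b hab hbu
    by_cases hu' : b = u0
    · subst hu'; rw [Fu]; exact (hau a hab.symm hv).symm
    by_cases hv' : b = v0
    · subst hv'; rw [Fv]; exact (hav a hab.symm hu).symm
    rw [Fa a hu hv, Fa b hu' hv']
    exact f3 a ((hmem a).2 ⟨hu, hv⟩) b ((hmem b).2 ⟨hu', hv'⟩) hab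
  · intro a b hab
    change F a = F b at hab
    by_contra hne
    by_cases hu : a = u0
    · subst hu
      rw [Fu] at hab
      by_cases hbv : b = v0
      · subst hbv; rw [Fv] at hab; exact hpq.ne hab
      · rw [Fa b (Ne.symm hne) hbv] at hab; exact (hT2 b (Ne.symm hne) hbv).1 hab.symm
    by_cases hv : a = v0
    · subst hv
      rw [Fv] at hab
      by_cases hbu : b = u0
      · subst hbu; rw [Fu] at hab; exact hpq.ne hab.symm
      · rw [Fa b hbu (Ne.symm hne)] at hab; exact (hT2 b hbu (Ne.symm hne)).2 hab.symm
    rw [Fa a hu hv] at hab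
    by_cases hu' : b = u0
    · subst hu'; rw [Fu] at hab; exact (hT2 a hu hv).1 hab
    by_cases hv' : b = v0
    · subst hv'; rw [Fv] at hab; exact (hT2 a hu hv).2 hab
    rw [Fa b hu' hv'] at hab
    exact f2 a ((hmem a).2 ⟨hu, hv⟩) b ((hmem b).2 ⟨hu', hv'⟩) hne hab

lemma embed' {V W : Type*} [Fintype V] {G : SimpleGraph V} {k : ℕ} {u0 v0 : V} {c : V → Fin k}
    (hc : CritCol G u0 v0 c) (R : SimpleGraph W) (S : Fin k → Finset W) (D : ℕ)
    (hS : ∀ i j, i ≠ j → ∀ x ∈ S i, #{y ∈ S j | ¬R.Adj x y} ≤ D)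
    (p q : W) (i : Fin k) (hpq : R.Adj p q) (hq : q ∈ S i)
    (h : ∀ j, j ≠ i → Fintype.card V * (D + 1) + D < #{y ∈ S j | R.Adj p y})
    (hi : Fintype.card V * (D + 1) + 2 < #(S i)) : containsCopy R G := by
  refine embed hc R S D hS p q i hpq ?_ hi
  intro j hj
  have h1 := h j hj
  have h2 := hS i j hj.symm q hq
  have h3 : #{y ∈ S j | R.Adj p y} ≤ #{y ∈ S j | R.Adj p y ∧ R.Adj q y} +
      #{y ∈ S j | ¬R.Adj q y} := by
    rw [← filter_filter]
    refine le_trans ?_ (Nat.add_le_add_left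
      (card_le_card (filter_subset_filter (fun y => ¬R.Adj q y) (filter_subset (R.Adj p) (S j)))) _)
    rw [card_filter_add_card_filter_not]
  omega

lemma ramsey_aux (s : ℕ) : ∀ a b : ℕ, a + b ≤ s → ∃ C : ℕ, ∀ {W : Type} (R : SimpleGraph W)
    (S : Finset W), C ≤ #S → (∃ K ⊆ S, #K = a ∧ ∀ x ∈ K, ∀ y ∈ K, x ≠ y → R.Adj x y) ∨
      (∃ K ⊆ S, #K = b ∧ ∀ x ∈ K, ∀ y ∈ K, x ≠ y → ¬R.Adj x y) := by
  induction s with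
  | zero =>
    intro a b hab
    refine ⟨0, fun R S _ => Or.inl ⟨∅, by simp, by simp; omega, by simp⟩⟩
  | succ s ih =>
    intro a b hab
    rcases Nat.eq_zero_or_pos a with rfl | ha
    · exact ⟨0, fun R S _ => Or.inl ⟨∅, by simp, by simp, by simp⟩⟩
    rcases Nat.eq_zero_or_pos b with rfl | hb
    · exact ⟨0, fun R S _ => Or.inr ⟨∅, by simp, by simp, by simp⟩⟩
    obtain ⟨C1, h1⟩ := ih (a - 1) b (by omega)
    obtain ⟨C2, h2⟩ := ih a (b - 1) (by omega)
    refine ⟨C1 + C2 + 1, ?_⟩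
    intro W R S hS
    obtain ⟨v, hv⟩ : S.Nonempty := card_pos.1 (by omega)
    have he : #(S.erase v) = #S - 1 := card_erase_of_mem hv
    have hsum := card_filter_add_card_filter_not (s := S.erase v) (fun y => R.Adj v y)
    have hor : C1 ≤ #{y ∈ S.erase v | R.Adj v y} ∨ C2 ≤ #{y ∈ S.erase v | ¬R.Adj v y} := by omega
    have hsub1 : {y ∈ S.erase v | R.Adj v y} ⊆ S :=
      (filter_subset _ _).trans (erase_subset _ _)
    have hsub2 : {y ∈ S.erase v | ¬R.Adj v y} ⊆ S :=
      (filter_subset _ _).trans (erase_subset _ _)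
    rcases hor with h | h
    · rcases h1 R _ h with ⟨K, hK, hKc, hKa⟩ | ⟨K, hK, hKc, hKa⟩
      · left
        have hvK : ∀ y ∈ K, R.Adj v y := fun y hy => (mem_filter.1 (hK hy)).2
        have hvn : v ∉ K := fun h => (hvK v h).ne rfl
        refine ⟨insert v K, insert_subset hv (hK.trans hsub1), ?_, ?_⟩
        · rw [card_insert_of_notMem hvn]; omega
        · intro x hx y hy hxy
          rcases mem_insert.1 hx with rfl | hx' <;> rcases mem_insert.1 hy with rfl | hy'
          · exact absurd rfl hxy
          · exact hvK y hy'
          · exact (hvK x hx').symm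
          · exact hKa x hx' y hy' hxy
      · right
        exact ⟨K, hK.trans hsub1, hKc, hKa⟩
    · rcases h2 R _ h with ⟨K, hK, hKc, hKa⟩ | ⟨K, hK, hKc, hKa⟩
      · left
        exact ⟨K, hK.trans hsub2, hKc, hKa⟩
      · right
        have hvK : ∀ y ∈ K, ¬R.Adj v y := fun y hy => (mem_filter.1 (hK hy)).2
        have hvn : v ∉ K := fun h => by simpa using (mem_filter.1 (hK h)).1
        refine ⟨insert v K, insert_subset hv (hK.trans hsub2), ?_, ?_⟩
        · rw [card_insert_of_notMem hvn]; omega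
        · intro x hx y hy hxy
          rcases mem_insert.1 hx with rfl | hx' <;> rcases mem_insert.1 hy with rfl | hy'
          · exact absurd rfl hxy
          · exact hvK y hy'
          · exact fun h => hvK x hx' h.symm
          · exact hKa x hx' y hy' hxy

def Pack {W : Type*} (B : SimpleGraph W) (t n : ℕ) (P : Finset W) : Prop :=
  ∃ T : Fin n → Finset W, (∀ i, T i ⊆ P) ∧ (∀ i, #(T i) = t) ∧
    (∀ i j, i ≠ j → Disjoint (T i) (T j)) ∧
    ∀ i, ∀ x ∈ T i, ∀ y ∈ T i, x ≠ y → B.Adj x y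

lemma Pack.cons {W : Type*} {B : SimpleGraph W} {t n : ℕ} {P K : Finset W}
    (h : Pack B t n P) (hd : Disjoint K P) (hK : #K = t)
    (hB : ∀ x ∈ K, ∀ y ∈ K, x ≠ y → B.Adj x y) : Pack B t (n + 1) (K ∪ P) := by
  obtain ⟨T, h1, h2, h3, h4⟩ := h
  refine ⟨Fin.cons K T, ?_, ?_, ?_, ?_⟩
  · intro i
    refine Fin.cases ?_ (fun i => ?_) i
    · exact subset_union_left
    · exact (h1 i).trans subset_union_right
  · intro i
    refine Fin.cases ?_ (fun i => ?_) i
    · exact hK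
    · exact h2 i
  · intro i j
    refine Fin.cases ?_ (fun i => ?_) i <;> refine Fin.cases ?_ (fun j => ?_) j
    · simp
    · intro _; simpa using hd.mono_right (h1 j)
    · intro _; simpa using (hd.mono_right (h1 i)).symm
    · intro hij; simpa using h3 i j (fun h => hij (by rw [h]))
  · intro i
    refine Fin.cases ?_ (fun i => ?_) i
    · exact hB
    · exact h4 i

lemma Pack.mono {W : Type*} {B : SimpleGraph W} {t n : ℕ} {P Q : Finset W}
    (h : Pack B t n P) (hPQ : P ⊆ Q) : Pack B t n Q := by
  obtain ⟨T, h1, h2⟩ := h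
  exact ⟨T, fun i => (h1 i).trans hPQ, h2⟩

lemma pack_of {W : Type*} (B : SimpleGraph W) (t C n : ℕ) : ∀ (P : Finset W),
    (∀ Q ⊆ P, C ≤ #Q → ∃ K ⊆ Q, #K = t ∧ ∀ x ∈ K, ∀ y ∈ K, x ≠ y → B.Adj x y) →
    n * t + C ≤ #P + t → Pack B t n P := by
  induction n with
  | zero =>
    intro P _ _
    exact ⟨fun _ => ∅, fun i => i.elim0, fun i => i.elim0, fun i => i.elim0, fun i => i.elim0⟩
  | succ n ih =>
    intro P hP hc
    rw [Nat.succ_mul] at hc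
    obtain ⟨K, hKP, hK, hKB⟩ := hP P subset_rfl (by omega)
    have := card_sdiff_of_subset hKP
    have := card_le_card hKP
    have h := ih (P \ K) (fun Q hQ => hP Q (hQ.trans sdiff_subset)) (by omega)
    exact (h.cons disjoint_sdiff hK hKB).mono (union_subset hKP sdiff_subset)

lemma pack_clique {W : Type*} (B : SimpleGraph W) (t n : ℕ) (P : Finset W)
    (hP : ∀ x ∈ P, ∀ y ∈ P, x ≠ y → B.Adj x y) (hc : n * t ≤ #P) : Pack B t n P := by
  refine pack_of B t t n P ?_ (by omega)
  intro Q hQ hQt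
  obtain ⟨K, hK, hKt⟩ := exists_subset_card_eq hQt
  exact ⟨K, hK, hKt, fun x hx y hy => hP x (hQ (hK hx)) y (hQ (hK hy))⟩

lemma Pack.fan {W : Type*} {B : SimpleGraph W} {t n : ℕ} {P : Finset W}
    (h : Pack B t n P) (x : W) (hx : ∀ y ∈ P, B.Adj x y) : containsCopy B (genFan n t) := by
  obtain ⟨T, h1, h2, h3, h4⟩ := h
  let e : ∀ i, Fin t ≃ T i := fun i => ((T i).equivFinOfCardEq (h2 i)).symm
  let g : Fin n × Fin t → W := fun p => (e p.1 p.2 : W)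
  have hg : ∀ p, g p ∈ T p.1 := fun p => (e p.1 p.2).2
  have ginj : Function.Injective g := by
    rintro ⟨i, a⟩ ⟨j, b⟩ hab
    by_cases hij : i = j
    · subst hij
      have : e i a = e i b := Subtype.ext hab
      rw [(e i).injective this]
    · exfalso
      have h5 := hg (i, a)
      rw [hab] at h5
      exact (disjoint_left.1 (h3 i j hij)) h5 (hg (j, b))
  let F : Option (Fin n × Fin t) → W := fun o => o.elim x g
  have key : ∀ p, B.Adj x (g p) := fun p => hx _ (h1 _ (hg p))
  refine ⟨⟨F, ?_⟩, ?_⟩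
  · rintro (_ | p) (_ | q) hpq
    · exact absurd rfl hpq.ne
    · exact key q
    · exact (key p).symm
    · have hne : p ≠ q := fun h => hpq.ne (by rw [h])
      have h12 : p.1 = q.1 := by
        simp only [genFan, SimpleGraph.fromRel_adj] at hpq
        rcases hpq.2 with h | h
        · rcases h with h | ⟨a, b, ha, hb, hab⟩
          · cases h
          · cases ha; cases hb; exact hab
        · rcases h with h | ⟨a, b, ha, hb, hab⟩
          · cases h
          · cases ha; cases hb; exact hab.symm
      exact h4 p.1 _ (hg p) _ (by rw [h12]; exact hg q) (fun h => hne (ginj h))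
  · rintro (_ | p) (_ | q) hpq
    · rfl
    · exact absurd hpq (key q).ne
    · exact absurd hpq.symm (key p).ne
    · rw [ginj hpq]

lemma clique_fan {W : Type*} (B : SimpleGraph W) (t n : ℕ) (P : Finset W)
    (hP : ∀ x ∈ P, ∀ y ∈ P, x ≠ y → B.Adj x y) (hc : n * t < #P) :
    containsCopy B (genFan n t) := by
  obtain ⟨x, hx⟩ : P.Nonempty := card_pos.1 (by omega)
  have he := card_erase_of_mem hx
  refine (pack_clique B t n (P.erase x) ?_ (by omega)).fan x ?_
  · exact fun a ha b hb => hP a (mem_of_mem_erase ha) b (mem_of_mem_erase hb)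
  · intro y hy
    exact hP x hx y (mem_of_mem_erase hy) (ne_of_mem_erase hy).symm

lemma clique_fan' {W : Type*} (B : SimpleGraph W) (t n : ℕ) (ht : 1 ≤ t) (hn : 1 ≤ n)
    (P : Finset W)
    (hP : ∀ x ∈ P, ∀ y ∈ P, x ≠ y → B.Adj x y) (hc : n * t ≤ #P) (w : W) (hw : w ∉ P)
    (hwP : t ≤ #{y ∈ P | B.Adj w y}) : containsCopy B (genFan n t) := by
  obtain ⟨Z, hZ, hZt⟩ := exists_subset_card_eq hwP
  obtain ⟨x, hx⟩ : Z.Nonempty := card_pos.1 (by omega)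
  have hZP : Z ⊆ P := hZ.trans (filter_subset _ _)
  have hZw : ∀ y ∈ Z, B.Adj w y := fun y hy => (mem_filter.1 (hZ hy)).2
  have he := card_erase_of_mem hx
  have hs := card_sdiff_of_subset hZP
  obtain ⟨n, rfl⟩ : ∃ n', n = n' + 1 := ⟨n - 1, by omega⟩
  rw [Nat.succ_mul] at hc
  have hp := pack_clique B t n (P \ Z)
    (fun a ha b hb => hP a (sdiff_subset ha) b (sdiff_subset hb)) (by omega)
  have hwe : w ∉ Z.erase x := fun h => hw (hZP (mem_of_mem_erase h))
  refine (hp.cons (K := insert w (Z.erase x)) ?_ ?_ ?_).fan x ?_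
  · rw [disjoint_insert_left]
    exact ⟨fun h => hw (sdiff_subset h), disjoint_sdiff.mono_left (erase_subset _ _)⟩
  · rw [card_insert_of_notMem hwe]; omega
  · intro a ha b hb hab
    rcases mem_insert.1 ha with rfl | ha' <;> rcases mem_insert.1 hb with rfl | hb'
    · exact absurd rfl hab
    · exact hZw b (mem_of_mem_erase hb')
    · exact (hZw a (mem_of_mem_erase ha')).symm
    · exact hP a (hZP (mem_of_mem_erase ha')) b (hZP (mem_of_mem_erase hb')) hab
  · intro y hy
    rcases mem_union.1 hy with hy | hy
    · rcases mem_insert.1 hy with rfl | hy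
      · exact (hZw x hx).symm
      · exact hP x (hZP hx) y (hZP (mem_of_mem_erase hy)) (ne_of_mem_erase hy).symm
    · refine hP x (hZP hx) y (sdiff_subset hy) ?_
      rintro rfl
      exact (mem_sdiff.1 hy).2 hx

lemma clique_copy {V W : Type*} [Fintype V] (G : SimpleGraph V) (R : SimpleGraph W) (K : Finset W)
    (hK : #K = Fintype.card V) (h : ∀ x ∈ K, ∀ y ∈ K, x ≠ y → R.Adj x y) : containsCopy R G := by
  have e : V ≃ K := Fintype.equivOfCardEq (by simp [hK])
  have hinj : Function.Injective (fun v => (e v : W)) :=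
    fun a b hab => e.injective (Subtype.ext hab)
  refine ⟨⟨fun v => (e v : W), ?_⟩, hinj⟩
  intro a b hab
  exact h _ (e a).2 _ (e b).2 (fun h => hab.ne (hinj h))

lemma nonred_bound {V : Type*} [Fintype V] (G : SimpleGraph V) (t : ℕ) :
    ∃ C : ℕ, ∀ (n : ℕ) {W : Type} [Fintype W] (R : SimpleGraph W), ¬containsCopy R G →
      ¬containsCopy Rᶜ (genFan n t) → ∀ x, #{y | ¬R.Adj x y} ≤ n * t + C := by
  obtain ⟨C, hC⟩ := ramsey_aux (Fintype.card V + t) (Fintype.card V) t le_rfl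
  refine ⟨C + 1, ?_⟩
  intro n W _ R hG hF x
  by_contra hlt
  push Not at hlt
  apply hF
  have hx : x ∈ ({y | ¬R.Adj x y} : Finset W) := by simp
  have he := card_erase_of_mem hx
  refine Pack.fan (P := ({y | ¬R.Adj x y} : Finset W).erase x) ?_ x ?_
  · refine pack_of _ t C n _ ?_ (by omega)
    intro Q hQ hQC
    rcases hC R Q hQC with ⟨K, hK, hKc, hKa⟩ | ⟨K, hK, hKc, hKa⟩
    · exact absurd (clique_copy G R K hKc hKa) hG
    · exact ⟨K, hK, hKc, fun a ha b hb hab => ⟨hab, hKa a ha b hb hab⟩⟩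
  · intro y hy
    rw [mem_erase, mem_filter] at hy
    exact ⟨hy.1.symm, hy.2.2⟩

lemma dc {W : Type*} [Fintype W] (R : SimpleGraph W) (E M j : ℕ) (A : Fin j → Finset W)
    (hA : ∀ i, #(A i) = M) (hR : ∀ x, #{y | ¬R.Adj x y} ≤ E) :
    ∑ v, ∑ i, #{y ∈ A i | ¬R.Adj v y} ≤ j * (M * E) := by
  rw [sum_comm]
  have : ∀ i, ∑ v, #{y ∈ A i | ¬R.Adj v y} ≤ M * E := by
    intro i
    have h := sum_card_bipartiteAbove_eq_sum_card_bipartiteBelow (s := (univ : Finset W))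
      (t := A i) (fun v y => ¬R.Adj v y)
    simp only [bipartiteAbove, bipartiteBelow] at h
    rw [h, ← hA i, ← smul_eq_mul]
    refine sum_le_card_nsmul _ _ _ ?_
    intro x _
    refine le_trans (le_of_eq ?_) (hR x)
    simp only [R.adj_comm]
  refine (sum_le_card_nsmul _ _ _ (fun i _ => this i)).trans ?_
  simp

lemma kpart (k C : ℕ) (j : ℕ) : j ≤ k → ∀ M : ℕ, ∃ d0 : ℕ, ∀ d, d0 ≤ d → ∀ {W : Type} [Fintype W]
    (R : SimpleGraph W), Fintype.card W = k * d → (∀ x, #{y | ¬R.Adj x y} ≤ d + C) →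
    ∃ A : Fin j → Finset W, (∀ i, #(A i) = M) ∧
      ∀ i i', i ≠ i' → ∀ x ∈ A i, ∀ y ∈ A i', R.Adj x y := by
  induction j with
  | zero =>
    intro _ M
    exact ⟨0, fun d _ W _ R _ _ => ⟨fun i => i.elim0, fun i => i.elim0, fun i => i.elim0⟩⟩
  | succ j ih =>
    intro hj M
    let M' := (k - 1) * M + 1
    let M1 := M + M'
    have hM1 : M1 = M + M' := rfl
    obtain ⟨d1, hd1⟩ := ih (by omega) M1
    let Q := (M1.choose M) ^ j
    refine ⟨d1 + M' * (Q * M + 1) + k * M1 * C, ?_⟩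
    intro d hd W _ R hW hR
    obtain ⟨A, hA, hAR⟩ := hd1 d (by
      have := Nat.zero_le (M' * (Q * M + 1)); have := Nat.zero_le (k * M1 * C); omega) R hW hR
    have hdc := dc R (d + C) M1 j A hA hR
    let good : Finset W := {v | ∀ i, M ≤ #{y ∈ A i | R.Adj v y}}
    have hbad : ∀ v ∉ good, M' ≤ ∑ i, #{y ∈ A i | ¬R.Adj v y} := by
      intro v hv
      simp only [good, mem_filter, mem_univ, true_and, not_forall, not_le] at hv
      obtain ⟨i, hi⟩ := hv
      have h1 := card_filter_add_card_filter_not (s := A i) (fun y => R.Adj v y)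
      have h2 := hA i
      refine le_trans ?_ (single_le_sum (f := fun i => #{y ∈ A i | ¬R.Adj v y})
        (fun _ _ => Nat.zero_le _) (mem_univ i))
      show M' ≤ #{y ∈ A i | ¬R.Adj v y}
      omega
    have hsum : #(univ \ good) * M' ≤ j * (M1 * (d + C)) := by
      refine le_trans ?_ hdc
      refine le_trans ?_ (sum_le_sum_of_subset (subset_univ (univ \ good)))
      rw [← smul_eq_mul]
      exact card_nsmul_le_sum _ _ _ (fun v hv => hbad v (by simpa using hv))
    have hgc : #(univ \ good) + #good = k * d := by
      rw [← hW, ← card_univ]; exact card_sdiff_add_card_eq_card (subset_univ _)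
    have hgood : Q * M < #good := by
      by_contra hle
      push Not at hle
      obtain ⟨k', rfl⟩ : ∃ k', k = k' + 1 := ⟨k - 1, by omega⟩
      have e1 : M' = k' * M + 1 := by simp [M']
      have h3 : j * (M1 * (d + C)) ≤ k' * (M1 * (d + C)) := Nat.mul_le_mul_right _ (by omega)
      have h4 : (k' + 1) * d * M' = #(univ \ good) * M' + #good * M' := by rw [← hgc]; ring
      have h5 : #good * M' ≤ Q * M * M' := Nat.mul_le_mul_right _ hle
      have h6 : (k' + 1) * d * M' = k' * d * M' + k' * M * d + d := by
        have : (k' + 1) * d * M' = k' * d * M' + d * M' := by ring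
        rw [this, add_assoc]
        congr 1
        rw [e1]; ring
      have h7 : k' * (M1 * (d + C)) = k' * d * M' + k' * M * d + k' * M1 * C := by
        rw [hM1]; ring
      have h8 : M' * (Q * M + 1) = Q * M * M' + M' := by ring
      have h9 : (k' + 1) * M1 * C = k' * M1 * C + M1 * C := by ring
      have h10 : 0 < M' := by omega
      omega
    let ch : W → Fin j → Finset W := fun v i =>
      if h : M ≤ #{y ∈ A i | R.Adj v y} then (exists_subset_card_eq h).choose else ∅
    have hch : ∀ v ∈ good, ∀ i, ch v i ⊆ {y ∈ A i | R.Adj v y} ∧ #(ch v i) = M := by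
      intro v hv i
      have h : M ≤ #{y ∈ A i | R.Adj v y} := by
        simp only [good, mem_filter, mem_univ, true_and] at hv; exact hv i
      simp only [ch, dif_pos h]
      exact (exists_subset_card_eq h).choose_spec
    have hmaps : ∀ v ∈ good, ch v ∈ Fintype.piFinset (fun i => (A i).powersetCard M) := by
      intro v hv
      rw [Fintype.mem_piFinset]
      intro i
      rw [mem_powersetCard]
      exact ⟨(hch v hv i).1.trans (filter_subset _ _), (hch v hv i).2⟩
    have hQ : #(Fintype.piFinset (fun i => (A i).powersetCard M)) = Q := by
      simp [Fintype.card_piFinset, hA, Q]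
    obtain ⟨Y, hY, hYc⟩ := exists_lt_card_fiber_of_mul_lt_card_of_maps_to hmaps
      (n := M) (by rw [hQ]; exact hgood)
    obtain ⟨Z, hZ, hZc⟩ := exists_subset_card_eq hYc.le
    have hY1 := Fintype.mem_piFinset.1 hY
    have hZY : ∀ z ∈ Z, ∀ i, ∀ y ∈ Y i, R.Adj z y := by
      intro z hz i y hy
      have hz' := mem_filter.1 (hZ hz)
      have := (hch z hz'.1 i).1 (by rw [hz'.2]; exact hy)
      exact (mem_filter.1 this).2
    refine ⟨Fin.cons Z Y, ?_, ?_⟩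
    · intro i
      refine Fin.cases ?_ (fun i => ?_) i
      · exact hZc
      · exact (mem_powersetCard.1 (hY1 i)).2
    · intro i i'
      refine Fin.cases ?_ (fun i => ?_) i <;> refine Fin.cases ?_ (fun i' => ?_) i'
      · simp
      · intro _ x hx y hy; exact hZY x hx i' y hy
      · intro _ x hx y hy; exact (hZY y hy i x hx).symm
      · intro hne x hx y hy
        exact hAR i i' (fun h => hne (by rw [h])) x ((mem_powersetCard.1 (hY1 i)).1 hx)
          y ((mem_powersetCard.1 (hY1 i')).1 hy)

lemma common_card {W : Type*} (R : SimpleGraph W) (S : Finset W) (p q : W) :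
    #S ≤ #{y ∈ S | R.Adj p y ∧ R.Adj q y} + #{y ∈ S | ¬R.Adj p y} + #{y ∈ S | ¬R.Adj q y} := by
  have h1 := card_filter_add_card_filter_not (s := S) (fun y => R.Adj p y)
  have h2 := card_filter_add_card_filter_not (s := {y ∈ S | R.Adj p y}) (fun y => R.Adj q y)
  have h3 := card_le_card (filter_subset_filter (fun y => ¬R.Adj q y) (filter_subset (fun y => R.Adj p y) S))
  rw [filter_filter] at h2
  omega

lemma fiber_lower {W : Type*} [Fintype W] {k d : ℕ} (hW : Fintype.card W = k * d)
    (S : Fin k → Finset W) (B : Finset W) (hcov : ∀ v, v ∈ B ∨ ∃ i, v ∈ S i)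
    (hS : ∀ i, #(S i) ≤ d) (i : Fin k) : d ≤ #(S i) + #B := by
  have h1 : (univ : Finset W) ⊆ B ∪ univ.biUnion S := by
    intro v _
    rw [mem_union, mem_biUnion]
    rcases hcov v with h | ⟨i, h⟩
    · exact Or.inl h
    · exact Or.inr ⟨i, mem_univ _, h⟩
  have h2 := (card_le_card h1).trans (card_union_le _ _)
  have h3 : #(univ.biUnion S) ≤ ∑ j, #(S j) := card_biUnion_le
  rw [card_univ, hW] at h2
  rw [← add_sum_erase _ _ (mem_univ i)] at h3
  have h4 : ∑ j ∈ univ.erase i, #(S j) ≤ #(univ.erase i) • d :=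
    sum_le_card_nsmul _ _ _ (fun j _ => hS j)
  rw [card_erase_of_mem (mem_univ i), card_univ, Fintype.card_fin, smul_eq_mul] at h4
  obtain ⟨k', rfl⟩ : ∃ k', k = k' + 1 := ⟨k - 1, by have := i.2; omega⟩
  rw [Nat.succ_mul] at h2
  simp only [Nat.add_sub_cancel] at h4
  omega

lemma stage1 {V : Type*} [Fintype V] {G : SimpleGraph V} {k : ℕ} {u0 v0 : V} {c : V → Fin k}
    (hc : CritCol G u0 v0 c) (C q : ℕ) :
    ∃ d0 : ℕ, ∀ d, d0 ≤ d → ∀ {W : Type} [Fintype W] (R : SimpleGraph W),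
      Fintype.card W = k * d → (∀ x, #{y | ¬R.Adj x y} ≤ d + C) → ¬containsCopy R G →
      (∀ P : Finset W, (∀ x ∈ P, ∀ y ∈ P, ¬R.Adj x y) → #P ≤ d) →
      ∃ (b : ℕ) (S : Fin k → Finset W), q * b ≤ d ∧ (∀ i, d ≤ #(S i) + b) ∧
        (∀ i j, i ≠ j → Disjoint (S i) (S j)) ∧ ∀ i, ∀ x ∈ S i, ∀ y ∈ S i, ¬R.Adj x y := by
  let m := Fintype.card V
  let s := q * (k * m + 1) + 1
  let M' := 2 * s + 3
  let M := m + M'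
  have hM' : M' = 2 * s + 3 := rfl
  have hM : M = m + M' := rfl
  obtain ⟨d0, hd0⟩ := kpart k C k le_rfl M
  refine ⟨d0 + k * M * C, ?_⟩
  intro d hd W _ R hW hR hG hcl
  have hd2 : d0 ≤ d := le_trans (Nat.le_add_right _ _) hd
  have hd3 : k * M * C ≤ d := le_trans (Nat.le_add_left _ _) hd
  obtain ⟨A, hA, hAR⟩ := hd0 d hd2 R hW hR
  have hdc := dc R (d + C) M k A hA hR
  have hS0 : ∀ i j, i ≠ j → ∀ x ∈ A i, #{y ∈ A j | ¬R.Adj x y} ≤ 0 := by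
    intro i j hij x hx
    rw [Nat.le_zero, card_eq_zero, filter_eq_empty_iff]
    intro y hy
    rw [not_not]
    exact hAR i j hij x hx y hy
  have hsplit : ∀ v i, #{y ∈ A i | R.Adj v y} + #{y ∈ A i | ¬R.Adj v y} = M := by
    intro v i
    rw [card_filter_add_card_filter_not, hA i]
  have hex : ∀ v, ∃ i, M' ≤ #{y ∈ A i | ¬R.Adj v y} := by
    intro v
    by_contra hcon
    push Not at hcon
    have hred : ∀ i, m < #{y ∈ A i | R.Adj v y} := by
      intro i; have := hcon i; have := hsplit v i; omega
    obtain ⟨z, hz⟩ : ({y ∈ A (c u0) | R.Adj v y} : Finset W).Nonempty :=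
      card_pos.1 (by have := hred (c u0); omega)
    rw [mem_filter] at hz
    refine hG (embed' hc R A 0 hS0 v z (c u0) hz.2 hz.1 ?_ ?_)
    · intro j _
      have := hred j
      simpa using this
    · rw [hA]
      change m * (0 + 1) + 2 < M
      omega
  choose f hf using hex
  let B : Finset W := {v | M' + s ≤ ∑ i, #{y ∈ A i | ¬R.Adj v y}}
  have hsing : ∀ v i, #{y ∈ A i | ¬R.Adj v y} ≤ ∑ i, #{y ∈ A i | ¬R.Adj v y} := fun v i =>
    single_le_sum (f := fun i => #{y ∈ A i | ¬R.Adj v y}) (fun _ _ => Nat.zero_le _) (mem_univ i)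
  have hlow : ∑ v : W, (M' + if v ∈ B then s else 0) ≤ k * (M * (d + C)) := by
    refine le_trans (sum_le_sum ?_) hdc
    intro v _
    split_ifs with hv
    · exact (mem_filter.1 hv).2
    · exact (hf v).trans (hsing v (f v))
  rw [sum_add_distrib, sum_const, card_univ, hW, smul_eq_mul, sum_ite_mem, univ_inter, sum_const,
    smul_eq_mul] at hlow
  have hqB : q * #B ≤ d := by
    have e1 : k * (M * (d + C)) = k * d * M' + k * m * d + k * M * C := by
      rw [hM]; ring
    have e2 : #B * s = (q * #B) * (k * m + 1) + #B := by
      simp only [s]; ring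
    have e3 : (k * m + 1) * (q * #B) ≤ (k * m + 1) * d := by
      have : (k * m + 1) * d = k * m * d + d := by ring
      rw [this, mul_comm]
      omega
    exact Nat.le_of_mul_le_mul_left e3 (by omega)
  let S : Fin k → Finset W := fun i => {v | v ∉ B ∧ f v = i}
  have hother : ∀ i, ∀ v ∈ S i, ∀ j, j ≠ i → #{y ∈ A j | ¬R.Adj v y} < s := by
    intro i v hv j hj
    simp only [S, mem_filter, mem_univ, true_and] at hv
    obtain ⟨hvB, rfl⟩ := hv
    have h1 : ∑ i, #{y ∈ A i | ¬R.Adj v y} < M' + s := by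
      simpa [B] using hvB
    rw [← add_sum_erase _ _ (mem_univ (f v))] at h1
    have h2 := single_le_sum (f := fun i => #{y ∈ A i | ¬R.Adj v y}) (s := univ.erase (f v))
      (fun _ _ => Nat.zero_le _) (mem_erase.2 ⟨hj, mem_univ j⟩)
    have h3 := hf v
    omega
  have hind : ∀ i, ∀ x ∈ S i, ∀ y ∈ S i, ¬R.Adj x y := by
    intro i x hx y hy hxy
    refine hG (embed hc R A 0 hS0 x y i hxy ?_ ?_)
    · intro j hj
      have h1 := hother i x hx j hj
      have h2 := hother i y hy j hj
      have h3 := common_card R (A j) x y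
      rw [hA] at h3
      change m * (0 + 1) < _
      omega
    · rw [hA]
      change m * (0 + 1) + 2 < M
      omega
  refine ⟨#B, S, hqB, ?_, ?_, hind⟩
  · refine fiber_lower hW S B ?_ (fun i => hcl _ (hind i))
    intro v
    by_cases hv : v ∈ B
    · exact Or.inl hv
    · exact Or.inr ⟨f v, by simp [S, hv]⟩
  · intro i j hij
    rw [Finset.disjoint_left]
    intro v h1 h2
    simp only [S, mem_filter] at h1 h2
    exact hij (h1.2.2.symm.trans h2.2.2)

lemma stage2 {V : Type*} [Fintype V] {G : SimpleGraph V} {k : ℕ} {u0 v0 : V} {c : V → Fin k}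
    (hc : CritCol G u0 v0 c) (C : ℕ) :
    ∃ d0 : ℕ, ∀ d, d0 ≤ d → ∀ {W : Type} [Fintype W] (R : SimpleGraph W),
      Fintype.card W = k * d → (∀ x, #{y | ¬R.Adj x y} ≤ d + C) → ¬containsCopy R G →
      (∀ P : Finset W, (∀ x ∈ P, ∀ y ∈ P, ¬R.Adj x y) → #P ≤ d) →
      ∃ f : W → Fin k, (∀ x y, f x = f y → ¬R.Adj x y) ∧ ∀ i, #{v | f v = i} = d := by
  let m := Fintype.card V
  let q := 2 * (3 * m + 10)
  obtain ⟨d0, hd0⟩ := stage1 hc C q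
  let K := 3 * m * (C + 1) + 9 * (C + 1) + 6
  refine ⟨d0 + 2 * K, ?_⟩
  intro d hd W _ R hW hR hG hcl
  obtain ⟨b, S, hqb, hSb, hdis, hind⟩ := hd0 d (by omega) R hW hR hG hcl
  let D := b + C
  let L := m * (D + 1)
  have hDL : 3 * L + 9 * D + b + 6 < d := by
    have e1 : 3 * L = 3 * m * b + 3 * m * (C + 1) := by simp only [L, D]; ring
    have e2 : q * b = 2 * (3 * m * b) + 20 * b := by simp only [q]; ring
    have e3 : K = 3 * m * (C + 1) + 9 * C + 15 := by simp only [K]; ring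
    simp only [D]
    omega
  have hcross : ∀ v i j, i ≠ j →
      #{y ∈ S i | ¬R.Adj v y} + #{y ∈ S j | ¬R.Adj v y} ≤ d + C := by
    intro v i j hij
    refine le_trans ?_ (hR v)
    rw [← card_union_of_disjoint (disjoint_filter_filter (hdis i j hij))]
    apply card_le_card
    intro y hy
    rw [mem_union, mem_filter, mem_filter] at hy
    rw [mem_filter]
    exact ⟨mem_univ _, by tauto⟩
  have hS : ∀ i j, i ≠ j → ∀ x ∈ S i, #{y ∈ S j | ¬R.Adj x y} ≤ D := by
    intro i j hij x hx
    have h1 := hcross x i j hij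
    have h2 : ({y ∈ S i | ¬R.Adj x y} : Finset W) = S i :=
      filter_true_of_mem (fun y hy => hind i x hx y hy)
    rw [h2] at h1
    have := hSb i
    simp only [D]
    omega
  have hbig : ∀ i, L + 2 < #(S i) := by
    intro i; have := hSb i; omega
  have hex : ∀ v, ∃ i, #{y ∈ S i | R.Adj v y} ≤ L + D := by
    intro v
    by_contra hcon
    push Not at hcon
    obtain ⟨z, hz⟩ : ({y ∈ S (c u0) | R.Adj v y} : Finset W).Nonempty :=
      card_pos.1 (by have := hcon (c u0); omega)
    rw [mem_filter] at hz
    exact hG (embed' hc R S D hS v z (c u0) hz.2 hz.1 (fun j _ => hcon j) (hbig _))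
  choose f hf using hex
  have hfo : ∀ v j, j ≠ f v → #{y ∈ S j | ¬R.Adj v y} ≤ L + 2 * D := by
    intro v j hj
    have h1 := hcross v (f v) j hj.symm
    have h2 := card_filter_add_card_filter_not (s := S (f v)) (fun y => R.Adj v y)
    have h3 := hSb (f v)
    have h4 := hf v
    simp only [D] at *
    omega
  have hfi : ∀ x y, f x = f y → ¬R.Adj x y := by
    intro x y hxy hadj
    refine hG (embed hc R S D hS x y (f x) hadj ?_ (hbig _))
    intro j hj
    have h1 := hfo x j hj
    have h2 := hfo y j (hxy ▸ hj)
    have h3 := common_card R (S j) x y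
    have h4 := hSb j
    change L < _
    omega
  have hle : ∀ i, #{v | f v = i} ≤ d := by
    intro i
    apply hcl
    intro x hx y hy
    rw [mem_filter] at hx hy
    exact hfi x y (hx.2.trans hy.2.symm)
  refine ⟨f, hfi, fun i => le_antisymm (hle i) ?_⟩
  have := fiber_lower hW (fun i => ({v | f v = i} : Finset W)) ∅
    (fun v => Or.inr ⟨f v, by simp⟩) hle i
  simpa using this

lemma copy_comp {V W W' : Type*} {G : SimpleGraph V} {R : SimpleGraph W} {R' : SimpleGraph W'}
    (h : containsCopy R G) (g : W → W') (hg : Function.Injective g)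
    (hR : ∀ a b, R.Adj a b → R'.Adj (g a) (g b)) : containsCopy R' G := by
  obtain ⟨f, hf⟩ := h
  exact ⟨⟨fun v => g (f v), fun hab => hR _ _ (f.map_rel hab)⟩, hg.comp hf⟩

lemma main_thm (k t : ℕ) (hk : 2 ≤ k) (ht : 2 ≤ t)
    {V : Type*} [Fintype V] (G : SimpleGraph V)
    (hchi : G.chromaticNumber = (k + 1 : ℕ)) (hcrit : EdgeCritical G) :
    ∃ n₀ : ℕ, ∀ n : ℕ, n₀ ≤ n →
      starArrows (k * n * t) ((k - 1) * n * t + t) G (genFan n t) := by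
  obtain ⟨u0, v0, c, hc⟩ := exists_critCol G k hchi hcrit
  obtain ⟨C, hC⟩ := nonred_bound G t
  obtain ⟨d0, hd0⟩ := stage2 hc C
  let m := Fintype.card V
  let L := m * (t + 1)
  refine ⟨d0 + 2 * (L + t) + k * t + 10, ?_⟩
  intro n hn R hRK
  by_contra hcon
  push Not at hcon
  obtain ⟨hG, hF⟩ := hcon
  obtain ⟨d, hd⟩ : ∃ d, d = n * t := ⟨_, rfl⟩
  have hnd : n ≤ d := by rw [hd]; exact Nat.le_mul_of_pos_right _ (by omega)
  have hN : k * n * t = k * d := by rw [hd]; ring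
  have hl : (k - 1) * n * t + t = (k - 1) * d + t := by rw [hd]; ring
  have htd : t ≤ d := by rw [hd]; exact Nat.le_mul_of_pos_left _ (by omega)
  have hkd : k * d = (k - 1) * d + d := by
    obtain ⟨k', rfl⟩ : ∃ k', k = k' + 1 := ⟨k - 1, by omega⟩
    simp only [Nat.add_sub_cancel]; ring
  let B := KstarK (k * n * t) ((k - 1) * n * t + t) \ R
  let R0 : SimpleGraph (Fin (k * n * t)) := R.comap some
  have hKss : ∀ a b : Fin (k * n * t), a ≠ b →
      (KstarK (k * n * t) ((k - 1) * n * t + t)).Adj (some a) (some b) := by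
    intro a b hab
    simp only [KstarK, SimpleGraph.fromRel_adj]
    exact ⟨fun h => hab (Option.some.inj h), Or.inl (Or.inl ⟨⟨a, rfl⟩, ⟨b, rfl⟩⟩)⟩
  have hKn : ∀ a : Fin (k * n * t), (a : ℕ) < (k - 1) * n * t + t →
      (KstarK (k * n * t) ((k - 1) * n * t + t)).Adj none (some a) := by
    intro a ha
    simp only [KstarK, SimpleGraph.fromRel_adj]
    exact ⟨by simp, Or.inl (Or.inr ⟨trivial, a, rfl, ha⟩)⟩
  have hBss : ∀ a b : Fin (k * n * t), a ≠ b → ¬R0.Adj a b → B.Adj (some a) (some b) :=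
    fun a b hab h => ⟨hKss a b hab, h⟩
  have hinj : Function.Injective (some : Fin (k * n * t) → _) := Option.some_injective _
  have hG0 : ¬containsCopy R0 G := fun h => hG (copy_comp h some hinj (fun _ _ h => h))
  have hF0 : ¬containsCopy R0ᶜ (genFan n t) := fun h =>
    hF (copy_comp h some hinj (fun a b h => hBss a b h.1 h.2))
  obtain ⟨f, hfi, hfd⟩ := hd0 d (by omega) R0 (by rw [Fintype.card_fin, hN])
    (by rw [hd]; exact hC n R0 hG0 hF0) hG0 (by
      intro P hP
      by_contra hlt
      exact hF0 (clique_fan R0ᶜ t n P (fun x hx y hy hxy => ⟨hxy, hP x hx y hy⟩) (by omega)))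
  let S : Fin k → Finset (Option (Fin (k * n * t))) := fun i =>
    ({v | f v = i} : Finset (Fin (k * n * t))).map Function.Embedding.some
  have hSc : ∀ i, #(S i) = d := fun i => by rw [card_map]; exact hfd i
  have hSm : ∀ i y, y ∈ S i ↔ ∃ a, f a = i ∧ some a = y := by
    intro i y; simp [S]
  have hcl : ∀ i, ∀ x ∈ S i, ∀ y ∈ S i, x ≠ y → B.Adj x y := by
    intro i x hx y hy hxy
    obtain ⟨a, ha, rfl⟩ := (hSm i x).1 hx
    obtain ⟨b, hb, rfl⟩ := (hSm i y).1 hy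
    exact hBss a b (fun h => hxy (by rw [h])) (hfi a b (ha.trans hb.symm))
  have hfan : ∀ i, ∀ w ∉ S i, #{y ∈ S i | B.Adj w y} < t := by
    intro i w hw
    by_contra hlt
    push Not at hlt
    exact hF (clique_fan' B t n (by omega) (by omega) (S i) (hcl i) (by rw [hSc, hd]) w hw
      (le_trans hlt (le_of_eq (by congr))))
  have hS : ∀ i j, i ≠ j → ∀ x ∈ S i, #{y ∈ S j | ¬R.Adj x y} ≤ t := by
    intro i j hij x hx
    obtain ⟨a, ha, rfl⟩ := (hSm i x).1 hx
    have hnot : some a ∉ S j := by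
      intro h
      obtain ⟨a', ha', h'⟩ := (hSm j _).1 h
      rw [hinj h'] at ha'
      exact hij (ha.symm.trans ha')
    refine le_trans (card_le_card ?_) (hfan j (some a) hnot).le
    intro y hy
    rw [mem_filter] at hy ⊢
    obtain ⟨b, hb, rfl⟩ := (hSm j y).1 hy.1
    refine ⟨hy.1, hBss a b ?_ hy.2⟩
    rintro rfl
    exact hnot hy.1
  have hnone : ∀ i, none ∉ S i := by
    intro i h
    obtain ⟨a, _, h'⟩ := (hSm i _).1 h
    cases h'
  let X : Finset (Option (Fin (k * n * t))) :=
    ({a | ¬((a : ℕ) < (k - 1) * n * t + t)} : Finset (Fin (k * n * t))).map Function.Embedding.some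
  have hX : #X + t = d := by
    have h1 := card_filter_add_card_filter_not (s := (univ : Finset (Fin (k * n * t))))
      (fun a => (a : ℕ) < (k - 1) * n * t + t)
    have h2 : #{a : Fin (k * n * t) | (a : ℕ) < (k - 1) * n * t + t} = (k - 1) * n * t + t := by
      rw [Fin.card_filter_val_lt]
      omega
    rw [card_univ, Fintype.card_fin, h2] at h1
    simp only [X, card_map]
    omega
  let nr : Fin k → ℕ := fun i => #{y ∈ S i | ¬R.Adj none y}
  let xs : Fin k → ℕ := fun i => #{y ∈ S i | y ∈ X}
  have hnr : ∀ i, nr i ≤ xs i + (t - 1) := by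
    intro i
    have h1 := hfan i none (hnone i)
    have h2 : ({y ∈ S i | ¬R.Adj none y} : Finset _) ⊆
        {y ∈ S i | y ∈ X} ∪ {y ∈ S i | B.Adj none y} := by
      intro y hy
      rw [mem_filter] at hy
      rw [mem_union, mem_filter, mem_filter]
      obtain ⟨a, ha, rfl⟩ := (hSm i y).1 hy.1
      by_cases hax : (a : ℕ) < (k - 1) * n * t + t
      · exact Or.inr ⟨hy.1, hKn a hax, hy.2⟩
      · exact Or.inl ⟨hy.1, by simpa [X] using hax⟩
    have h3 := (card_le_card h2).trans (card_union_le _ _)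
    simp only [nr, xs]
    omega
  have hxs : ∀ i j, i ≠ j → xs i + xs j ≤ #X := by
    intro i j hij
    simp only [xs]
    rw [← card_union_of_disjoint]
    · apply card_le_card
      intro y hy
      rw [mem_union, mem_filter, mem_filter] at hy
      tauto
    · rw [Finset.disjoint_left]
      intro y h1 h2
      obtain ⟨a, ha, rfl⟩ := (hSm i y).1 (mem_filter.1 h1).1
      obtain ⟨b, hb, h'⟩ := (hSm j _).1 (mem_filter.1 h2).1
      rw [hinj h'] at hb
      exact hij (ha.symm.trans hb)
  have hxs1 : ∀ i, xs i ≤ #X := by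
    intro i
    apply card_le_card
    intro y hy
    exact (mem_filter.1 hy).2
  have hsplit : ∀ i, #{y ∈ S i | R.Adj none y} + nr i = d := by
    intro i
    rw [← hSc i]
    exact card_filter_add_card_filter_not _
  obtain ⟨i, _, hi⟩ := exists_max_image (univ : Finset (Fin k)) nr ⟨c u0, mem_univ _⟩
  obtain ⟨z, hz⟩ : ({y ∈ S i | R.Adj none y} : Finset _).Nonempty := by
    apply card_pos.1
    have h1 := hsplit i
    have h2 := hnr i
    have h3 := hxs1 i
    omega
  rw [mem_filter] at hz
  refine hG (embed' hc R S t hS none z i hz.2 hz.1 ?_ ?_)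
  · intro j hj
    have h1 := hsplit j
    have h2 := hnr j
    have h3 := hnr i
    have h4 := hi j (mem_univ _)
    have h5 := hxs i j hj.symm
    have h6 : 2 * t ≤ k * t := Nat.mul_le_mul_right _ hk
    change L + t < _
    omega
  · rw [hSc]
    change L + 2 < d
    omega

end helpers

theorem statement_4 (k t : ℕ) (hk : 2 ≤ k) (ht : 2 ≤ t)
    {V : Type*} [Fintype V] (G : SimpleGraph V)
    (hchi : G.chromaticNumber = (k + 1 : ℕ)) (hcrit : EdgeCritical G) :
    ∃ n₀ : ℕ, ∀ n : ℕ, n₀ ≤ n →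
      starArrows (k * n * t) ((k - 1) * n * t + t) G (genFan n t) := by
  exact main_thm k t hk ht G hchi hcrit
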